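/- Let 0 < γ < 1 and ν > −1/2. Then for all x > 0, ∫_0^x e^{−γt} t^ν I_ν(t) dt < ( (2ν+7) / ((2ν+1)(1−γ)) ) · e^{−γx} x^ν I_ν(x). -/

import Mathlib

open Real MeasureTheory

/-- Modified Bessel function of the first kind, `I_ν(x) = ∑_{k} (x/2)^{ν+2k} / (Γ(ν+k+1) k!)`. -/
noncomputable def besselI (ν x : ℝ) : ℝ :=
  ∑' k : ℕ, (x / 2) ^ (ν + 2 * (k : ℝ)) / (Real.Gamma (ν + (k : ℝ) + 1) * (Nat.factorial k : ℝ))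

/-- Modified Bessel function of the second kind, `K_ν(x) = ∫_0^∞ e^{-x cosh t} cosh(ν t) dt`. -/
noncomputable def besselK (ν x : ℝ) : ℝ :=
  ∫ t in Set.Ioi (0 : ℝ), Real.exp (-x * Real.cosh t) * Real.cosh (ν * t)

/-- Lower incomplete gamma function `γ(a, x) = ∫_0^x t^{a-1} e^{-t} dt`. -/
noncomputable def lowerIncGamma (a x : ℝ) : ℝ :=
  ∫ t in (0 : ℝ)..x, t ^ (a - 1) * Real.exp (-t)

/-! For `σ = ±1` the function `P_σ(t) = e^{-σt} t^{ν+1} (I_ν(t) + σ I_{ν+1}(t))` vanishes at `0`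
and has derivative `(2ν+1) e^{-σt} t^ν I_ν(t)`, so it is nonnegative and increasing. For `σ = -1`
this says `I_{ν+1} ≤ I_ν` (Soni's inequality). Put `w(t) = e^{-t} t^ν I_ν(t)`. For `σ = 1`, Soni's
inequality yields `t w(t) ≤ P_1(t) ≤ P_1(x) ≤ 2x w(x)` on `(0, x]`. The integrand is
`e^{(1-γ)t} w(t)`; writing `1 = t/x + (1 - t/x)`, the first part is bounded directly and the second
is integrated by parts against `P_1`. The resulting constant `(4ν+4) / ((2ν+1)(1-γ))` suffices for
`ν ≤ 1/2`. For `ν > 1/2`, Soni's inequality at `ν - 1` makes `w` itself increasing, and the constant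
`1 / (1-γ)` works. -/

/-- The Bessel–Clifford function `C_ν(z) = ∑ z^k / (Γ(ν+k+1) k!)`, the entire factor of
`I_ν`: `I_ν(x) = (x/2)^ν C_ν(x²/4)`. At the poles of `Γ` the convention `1 / 0 = 0` gives the
right term. -/
noncomputable def besselClifford (ν z : ℝ) : ℝ :=
  ∑' k : ℕ, z ^ k / (Gamma (ν + k + 1) * k.factorial)

lemma inv_Gamma_eq_self_mul_inv_Gamma_add_one (s : ℝ) :
    (Gamma s)⁻¹ = s * (Gamma (s + 1))⁻¹ := by
  rcases eq_or_ne s 0 with rfl | hs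
  · simp only [Gamma_zero, inv_zero, zero_mul]
  · rw [Gamma_add_one hs, mul_inv, mul_inv_cancel_left₀ hs]

lemma summable_besselClifford (ν z : ℝ) :
    Summable fun k : ℕ => z ^ k / (Gamma (ν + k + 1) * k.factorial) := by
  refine summable_of_ratio_norm_eventually_le (r := 1 / 2) (by norm_num) ?_
  filter_upwards [tendsto_natCast_atTop_atTop.eventually_ge_atTop (-ν),
    tendsto_natCast_atTop_atTop.eventually_ge_atTop (2 * |z|)] with k hkν hkz
  have hden : 2 * |z| ≤ (ν + k + 1) * (k + 1) := by nlinarith [abs_nonneg z]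
  have hratio : z ^ (k + 1) / (Gamma (ν + (k + 1 : ℕ) + 1) * (k + 1).factorial) =
      z / ((ν + k + 1) * (k + 1)) * (z ^ k / (Gamma (ν + k + 1) * k.factorial)) := by
    rw [Nat.cast_add_one, ← add_assoc ν, Gamma_add_one (by linarith), Nat.factorial_succ,
      div_mul_div_comm, pow_succ']
    push_cast
    ring
  rw [hratio, norm_mul, norm_div, norm_eq_abs, norm_eq_abs]
  refine mul_le_mul_of_nonneg_right ?_ (norm_nonneg _)
  have hden_pos : 0 < (ν + k + 1) * (k + 1) := mul_pos (by linarith) (by positivity)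
  rw [abs_of_pos hden_pos, div_le_iff₀ hden_pos]
  linarith

lemma hasSum_besselClifford (ν z : ℝ) :
    HasSum (fun k : ℕ => z ^ k / (Gamma (ν + k + 1) * k.factorial)) (besselClifford ν z) :=
  (summable_besselClifford ν z).hasSum

lemma hasSum_deriv_besselClifford (ν z : ℝ) :
    HasSum (fun k : ℕ => k * z ^ (k - 1) / (Gamma (ν + k + 1) * k.factorial))
      (besselClifford (ν + 1) z) := by
  rw [← hasSum_nat_add_iff' 1]
  convert! hasSum_besselClifford (ν + 1) z using 1
  · funext k
    rw [Nat.factorial_succ, Nat.add_sub_cancel, show ν + 1 + k + 1 = ν + (k + 1 : ℕ) + 1 by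
      push_cast; ring]
    push_cast
    field_simp
  · simp

lemma hasDerivAt_besselClifford (ν z : ℝ) :
    HasDerivAt (besselClifford ν) (besselClifford (ν + 1) z) z := by
  have hz : z ∈ Set.Ioo (-(|z| + 1)) (|z| + 1) := by
    constructor <;> linarith [neg_abs_le z, le_abs_self z]
  rw [← (hasSum_deriv_besselClifford ν z).tsum_eq]
  refine hasDerivAt_tsum_of_isPreconnected (hasSum_deriv_besselClifford ν (|z| + 1)).summable.norm
    isOpen_Ioo isPreconnected_Ioo (fun k y _ => (hasDerivAt_pow k y).div_const _) (fun k y hy => ?_)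
    hz (summable_besselClifford ν z) hz
  have hy : |y| ≤ |(|z| + 1)| := by
    rw [abs_of_pos (show 0 < |z| + 1 by positivity)]
    exact abs_le.2 ⟨hy.1.le, hy.2.le⟩
  simp only [norm_div, norm_mul, norm_pow, norm_eq_abs]
  gcongr

lemma continuous_besselClifford (ν : ℝ) : Continuous (besselClifford ν) :=
  continuous_iff_continuousAt.2 fun z => (hasDerivAt_besselClifford ν z).continuousAt

lemma besselClifford_eq_add (ν z : ℝ) :
    besselClifford ν z = (ν + 1) * besselClifford (ν + 1) z + z * besselClifford (ν + 2) z := by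
  rw [show ν + 2 = ν + 1 + 1 by ring]
  refine (hasSum_besselClifford ν z).unique ?_
  convert! ((hasSum_besselClifford (ν + 1) z).mul_left (ν + 1)).add
    ((hasSum_deriv_besselClifford (ν + 1) z).mul_left z) using 1
  funext k
  have hpow : z * (k * z ^ (k - 1)) = k * z ^ k := by
    rcases k with _ | k
    · simp only [Nat.cast_zero, zero_mul, mul_zero]
    · rw [Nat.add_sub_cancel, pow_succ, mul_left_comm, mul_comm z]
  simp only [div_eq_mul_inv, mul_inv]
  rw [inv_Gamma_eq_self_mul_inv_Gamma_add_one (ν + k + 1),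
    show ν + 1 + k + 1 = ν + k + 1 + 1 by ring]
  linear_combination -(Gamma (ν + k + 1 + 1))⁻¹ * (k.factorial : ℝ)⁻¹ * hpow

lemma besselClifford_pos {ν z : ℝ} (hν : -1 < ν) (hz : 0 ≤ z) : 0 < besselClifford ν z := by
  have hΓ (k : ℕ) : 0 < Gamma (ν + k + 1) :=
    Gamma_pos_of_pos (by linarith [k.cast_nonneg (α := ℝ)])
  refine (summable_besselClifford ν z).tsum_pos (fun k => ?_) 0 ?_
  · have := hΓ k
    positivity
  · have := hΓ 0
    rw [pow_zero]
    positivity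

lemma besselI_eq_rpow_mul_besselClifford (ν : ℝ) {x : ℝ} (hx : 0 < x) :
    besselI ν x = (x / 2) ^ ν * besselClifford ν (x ^ 2 / 4) := by
  rw [besselI, besselClifford, ← tsum_mul_left]
  refine tsum_congr fun k => ?_
  rw [rpow_add (by positivity), ← Nat.cast_ofNat, ← Nat.cast_mul, rpow_natCast, pow_mul,
    mul_div_assoc, div_pow]
  norm_num

lemma besselI_pos {ν x : ℝ} (hν : -1 < ν) (hx : 0 < x) : 0 < besselI ν x := by
  rw [besselI_eq_rpow_mul_besselClifford ν hx]
  have := besselClifford_pos hν (show 0 ≤ x ^ 2 / 4 by positivity)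
  positivity

lemma besselI_sub_besselI_add_two (ν : ℝ) {x : ℝ} (hx : 0 < x) :
    besselI ν x - besselI (ν + 2) x = 2 * (ν + 1) / x * besselI (ν + 1) x := by
  simp only [besselI_eq_rpow_mul_besselClifford _ hx]
  rw [besselClifford_eq_add ν, rpow_add (by positivity) ν, rpow_add (by positivity) ν, rpow_one,
    rpow_two]
  field_simp
  ring

lemma hasDerivAt_besselI (ν : ℝ) {x : ℝ} (hx : 0 < x) :
    HasDerivAt (besselI ν) (besselI (ν + 1) x + ν / x * besselI ν x) x := by
  have hpow : HasDerivAt (fun t : ℝ => (t / 2) ^ ν) (ν / x * (x / 2) ^ ν) x := by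
    refine (((hasDerivAt_id x).div_const 2).rpow_const (p := ν)
      (Or.inl (by positivity))).congr_deriv ?_
    rw [id, rpow_sub_one (by positivity)]
    field_simp
  have hC : HasDerivAt (fun t : ℝ => besselClifford ν (t ^ 2 / 4))
      (besselClifford (ν + 1) (x ^ 2 / 4) * (x / 2)) x := by
    refine ((hasDerivAt_besselClifford ν _).comp x
      ((hasDerivAt_pow 2 x).div_const 4)).congr_deriv ?_
    simp only [Nat.cast_ofNat, Nat.add_one_sub_one, pow_one]
    ring
  refine ((hpow.mul hC).congr_of_eventuallyEq ?_).congr_deriv ?_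
  · filter_upwards [lt_mem_nhds hx] with t ht using besselI_eq_rpow_mul_besselClifford ν ht
  · simp only [besselI_eq_rpow_mul_besselClifford _ hx]
    rw [rpow_add_one (by positivity) ν]
    ring

lemma hasDerivAt_besselI_add_one (ν : ℝ) {x : ℝ} (hx : 0 < x) :
    HasDerivAt (besselI (ν + 1)) (besselI ν x - (ν + 1) / x * besselI (ν + 1) x) x := by
  refine (hasDerivAt_besselI (ν + 1) hx).congr_deriv ?_
  rw [show ν + 1 + 1 = ν + 2 by ring]
  linear_combination -besselI_sub_besselI_add_two ν hx

/-- The integrand `e^{-γt} t^ν I_ν(t)`, for every real `γ`: the weights `γ = 1` and `γ = -1` are the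
ones for which it has an explicit primitive. -/
noncomputable def weightedBesselI (γ ν t : ℝ) : ℝ :=
  exp (-γ * t) * t ^ ν * besselI ν t

lemma weightedBesselI_pos (γ : ℝ) {ν t : ℝ} (hν : -1 < ν) (ht : 0 < t) :
    0 < weightedBesselI γ ν t := by
  have := besselI_pos hν ht
  rw [weightedBesselI]
  positivity

lemma weightedBesselI_eq_exp_mul (γ ν t : ℝ) :
    weightedBesselI γ ν t = exp ((1 - γ) * t) * weightedBesselI 1 ν t := by
  rw [weightedBesselI, weightedBesselI, ← mul_assoc, ← mul_assoc, ← exp_add]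
  ring_nf

lemma weightedBesselI_eq_mul_besselClifford (γ ν : ℝ) {t : ℝ} (ht : 0 < t) :
    weightedBesselI γ ν t =
      t ^ (2 * ν) * (exp (-γ * t) * ((1 / 2) ^ ν * besselClifford ν (t ^ 2 / 4))) := by
  rw [weightedBesselI, besselI_eq_rpow_mul_besselClifford ν ht, two_mul, rpow_add ht,
    div_eq_mul_one_div t, mul_rpow ht.le (by norm_num)]
  ring

lemma integrableOn_weightedBesselI (γ : ℝ) {ν : ℝ} (hν : -(1 / 2) < ν) {x : ℝ} (hx : 0 ≤ x) :
    IntegrableOn (weightedBesselI γ ν) (Set.Icc 0 x) := by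
  have hC := continuous_besselClifford ν
  have h_integrable : IntervalIntegrable (fun t : ℝ => t ^ (2 * ν) *
      (exp (-γ * t) * ((1 / 2) ^ ν * besselClifford ν (t ^ 2 / 4)))) volume 0 x :=
    (intervalIntegral.intervalIntegrable_rpow' (by linarith)).mul_continuousOn (by fun_prop)
  rw [integrableOn_Icc_iff_integrableOn_Ioc]
  exact ((intervalIntegrable_iff_integrableOn_Ioc_of_le hx).1 h_integrable).congr_fun
    (fun t ht => (weightedBesselI_eq_mul_besselClifford γ ν ht.1).symm) measurableSet_Ioc

lemma hasDerivAt_exp_mul_rpow (γ ν : ℝ) {t : ℝ} (ht : 0 < t) :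
    HasDerivAt (fun s => exp (-γ * s) * s ^ ν) ((ν / t - γ) * (exp (-γ * t) * t ^ ν)) t := by
  have hexp := ((hasDerivAt_id t).const_mul (-γ)).exp
  have hpow := hasDerivAt_rpow_const (p := ν) (Or.inl ht.ne')
  refine (hexp.mul hpow).congr_deriv ?_
  simp only [id]
  rw [rpow_sub_one ht.ne']
  field_simp
  ring

/-- For `σ = 1` and `σ = -1`, the primitive of `(2ν+1) e^{-σt} t^ν I_ν(t)` that vanishes at `0`. -/
noncomputable def weightedBesselIPrimitive (σ ν t : ℝ) : ℝ :=
  exp (-σ * t) * t ^ (ν + 1) * (besselI ν t + σ * besselI (ν + 1) t)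

lemma hasDerivAt_weightedBesselIPrimitive {σ : ℝ} (hσ : σ ^ 2 = 1) (ν : ℝ) {t : ℝ} (ht : 0 < t) :
    HasDerivAt (weightedBesselIPrimitive σ ν) ((2 * ν + 1) * weightedBesselI σ ν t) t := by
  have hI := (hasDerivAt_besselI ν ht).add ((hasDerivAt_besselI_add_one ν ht).const_mul σ)
  refine ((hasDerivAt_exp_mul_rpow σ (ν + 1) ht).mul hI).congr_deriv ?_
  simp only [Pi.add_apply, weightedBesselI]
  rw [rpow_add_one ht.ne']
  field_simp
  linear_combination (-t * besselI (ν + 1) t) * hσ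

lemma weightedBesselIPrimitive_zero (σ : ℝ) {ν : ℝ} (hν : ν ≠ -1) :
    weightedBesselIPrimitive σ ν 0 = 0 := by
  rw [weightedBesselIPrimitive, zero_rpow (by grind), mul_zero, zero_mul]

lemma continuousOn_weightedBesselIPrimitive (σ : ℝ) {ν : ℝ} (hν : -(1 / 2) < ν) :
    ContinuousOn (weightedBesselIPrimitive σ ν) (Set.Ici 0) := by
  have hC₀ := continuous_besselClifford ν
  have hC₁ := continuous_besselClifford (ν + 1)
  have hpow : Continuous fun t : ℝ => t ^ (2 * ν + 1) := continuous_rpow_const (by linarith)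
  have hcont : Continuous fun t : ℝ => t ^ (2 * ν + 1) * (exp (-σ * t) * (1 / 2) ^ ν *
      (besselClifford ν (t ^ 2 / 4) + σ * (t / 2) * besselClifford (ν + 1) (t ^ 2 / 4))) := by
    fun_prop
  refine hcont.continuousOn.congr fun t ht => ?_
  rcases (Set.mem_Ici.1 ht).eq_or_lt with rfl | ht
  · rw [weightedBesselIPrimitive_zero σ (by linarith), zero_eq_mul]
    exact Or.inl (zero_rpow (by linarith))
  · simp only [weightedBesselIPrimitive, besselI_eq_rpow_mul_besselClifford _ ht]
    rw [rpow_add_one (x := t / 2) (by positivity), rpow_add_one ht.ne', rpow_add_one ht.ne',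
      two_mul, rpow_add ht, div_eq_mul_one_div t, mul_rpow ht.le (by norm_num)]
    ring

lemma monotoneOn_weightedBesselIPrimitive {σ ν : ℝ} (hσ : σ ^ 2 = 1) (hν : -(1 / 2) < ν) :
    MonotoneOn (weightedBesselIPrimitive σ ν) (Set.Ici 0) := by
  refine monotoneOn_of_hasDerivWithinAt_nonneg (convex_Ici 0)
    (continuousOn_weightedBesselIPrimitive σ hν)
    (fun t ht => (hasDerivAt_weightedBesselIPrimitive hσ ν ?_).hasDerivWithinAt) fun t ht => ?_
  · rwa [interior_Ici] at ht
  · rw [interior_Ici] at ht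
    exact mul_nonneg (by linarith) (weightedBesselI_pos σ (by linarith) ht).le

lemma besselI_add_one_le {ν x : ℝ} (hν : -(1 / 2) < ν) (hx : 0 < x) :
    besselI (ν + 1) x ≤ besselI ν x := by
  have hP : 0 ≤ weightedBesselIPrimitive (-1) ν x := by
    rw [← weightedBesselIPrimitive_zero (-1) (show ν ≠ -1 by linarith)]
    exact monotoneOn_weightedBesselIPrimitive (by norm_num) hν Set.self_mem_Ici hx.le hx.le
  have hdiff := nonneg_of_mul_nonneg_right hP (by positivity)
  linarith

lemma mul_weightedBesselI_le_weightedBesselIPrimitive {σ ν t : ℝ} (hσ : 0 ≤ σ) (hν : -2 < ν)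
    (ht : 0 < t) : t * weightedBesselI σ ν t ≤ weightedBesselIPrimitive σ ν t := by
  have hI := besselI_pos (show -1 < ν + 1 by linarith) ht
  calc t * weightedBesselI σ ν t = exp (-σ * t) * t ^ (ν + 1) * besselI ν t := by
        rw [weightedBesselI, rpow_add_one ht.ne']; ring
    _ ≤ weightedBesselIPrimitive σ ν t := by
        rw [weightedBesselIPrimitive]
        gcongr
        exact le_add_of_nonneg_right (by positivity)

lemma weightedBesselIPrimitive_le_mul_weightedBesselI {σ ν t : ℝ} (hσ : 0 ≤ σ)
    (hν : -(1 / 2) < ν) (ht : 0 < t) :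
    weightedBesselIPrimitive σ ν t ≤ (1 + σ) * (t * weightedBesselI σ ν t) := by
  calc weightedBesselIPrimitive σ ν t
      ≤ exp (-σ * t) * t ^ (ν + 1) * (besselI ν t + σ * besselI ν t) := by
        rw [weightedBesselIPrimitive]
        gcongr
        exact besselI_add_one_le hν ht
    _ = (1 + σ) * (t * weightedBesselI σ ν t) := by
        rw [weightedBesselI, rpow_add_one ht.ne']; ring

lemma hasDerivAt_weightedBesselI_add_one (γ ν : ℝ) {t : ℝ} (ht : 0 < t) :
    HasDerivAt (weightedBesselI γ (ν + 1))
      (exp (-γ * t) * t ^ (ν + 1) * (besselI ν t - γ * besselI (ν + 1) t)) t := by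
  refine ((hasDerivAt_exp_mul_rpow γ (ν + 1) ht).mul
    (hasDerivAt_besselI_add_one ν ht)).congr_deriv ?_
  field_simp
  ring

lemma monotoneOn_weightedBesselI_one {ν : ℝ} (hν : 1 / 2 < ν) :
    MonotoneOn (weightedBesselI 1 ν) (Set.Ioi 0) := by
  obtain ⟨μ, rfl⟩ : ∃ μ, ν = μ + 1 := ⟨ν - 1, by ring⟩
  have hderiv (t : ℝ) (ht : 0 < t) := hasDerivAt_weightedBesselI_add_one 1 μ ht
  refine monotoneOn_of_hasDerivWithinAt_nonneg (convex_Ioi 0)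
    (fun t ht => (hderiv t ht).continuousAt.continuousWithinAt)
    (fun t ht => (hderiv t (interior_subset ht)).hasDerivWithinAt) fun t ht => ?_
  have ht : 0 < t := interior_subset ht
  have := besselI_add_one_le (show -(1 / 2) < μ by linarith) ht
  exact mul_nonneg (by positivity) (by linarith)

lemma integral_exp_mul_le_of_mul_le_primitive {c d x : ℝ} {f F : ℝ → ℝ} (hc : 0 < c) (hd : 0 < d)
    (hx : 0 < x) (hF_cont : ContinuousOn F (Set.Icc 0 x))
    (hF_deriv : ∀ t ∈ Set.Ioo 0 x, HasDerivAt F (c * f t) t) (hF_mono : MonotoneOn F (Set.Icc 0 x))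
    (hF_zero_nonneg : 0 ≤ F 0) (hfF : ∀ t ∈ Set.Ioo 0 x, t * f t ≤ F t)
    (h_integrable : IntegrableOn (fun t => exp (d * t) * f t) (Set.Icc 0 x)) :
    ∫ t in (0 : ℝ)..x, exp (d * t) * f t ≤
      (1 + 1 / c) * (F x / x) * ((exp (d * x) - 1) / d) := by
  set K := (1 + 1 / c) * (F x / x) with hK
  -- Integrating by parts, `1 - t / x` kills the boundary term at `x`; the one at `0` is `≤ 0`.
  let G (t : ℝ) := exp (d * t) * ((1 - t / x) * F t / c + K / d)
  let G' (t : ℝ) :=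
    exp (d * t) * (d * ((1 - t / x) * F t / c) + K - F t / (c * x) + (1 - t / x) * f t)
  have hG_cont : ContinuousOn G (Set.Icc 0 x) := by fun_prop
  have hG_deriv (t : ℝ) (ht : t ∈ Set.Ioo 0 x) : HasDerivAt G (G' t) t := by
    have hexp := ((hasDerivAt_id t).const_mul d).exp
    have hprod := (((hasDerivAt_id t).div_const x).const_sub 1).mul (hF_deriv t ht)
    refine (hexp.mul ((hprod.div_const c).add_const (K / d))).congr_deriv ?_
    simp only [Pi.mul_apply, id, G']
    field_simp
    ring
  have hle (t : ℝ) (ht : t ∈ Set.Ioo 0 x) : exp (d * t) * f t ≤ G' t := by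
    have ht' : t ∈ Set.Icc 0 x := Set.Ioo_subset_Icc_self ht
    have hF_nonneg : 0 ≤ F t :=
      hF_zero_nonneg.trans (hF_mono (Set.left_mem_Icc.2 hx.le) ht' ht.1.le)
    have hF_le : F t ≤ F x := hF_mono ht' (Set.right_mem_Icc.2 hx.le) ht.2.le
    have hrest : 0 ≤ d * ((1 - t / x) * F t / c) := by
      have : 0 ≤ 1 - t / x := sub_nonneg.2 ((div_le_one hx).2 ht.2.le)
      positivity
    have hK_ge : t / x * f t + F t / (c * x) ≤ K := by
      calc t / x * f t + F t / (c * x) = t * f t / x + F t / (c * x) := by ring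
        _ ≤ F x / x + F x / (c * x) := by
          gcongr
          exact (hfF t ht).trans hF_le
        _ = K := by rw [hK]; field_simp
    refine mul_le_mul_of_nonneg_left ?_ (exp_pos _).le
    linarith
  calc ∫ t in (0 : ℝ)..x, exp (d * t) * f t ≤ G x - G 0 :=
        intervalIntegral.integral_le_sub_of_hasDeriv_right_of_le hx.le hG_cont
          (fun t ht => (hG_deriv t ht).hasDerivWithinAt) h_integrable hle
    _ = K * ((exp (d * x) - 1) / d) - F 0 / c := by
        simp only [G, div_self hx.ne', mul_zero, exp_zero]
        ring
    _ ≤ K * ((exp (d * x) - 1) / d) := sub_le_self _ (by positivity)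

lemma integral_weightedBesselI_lt_of_neg_half_lt {γ ν x : ℝ} (hγ : γ < 1) (hν : -(1 / 2) < ν)
    (hx : 0 < x) :
    ∫ t in (0 : ℝ)..x, weightedBesselI γ ν t <
      (4 * ν + 4) / ((2 * ν + 1) * (1 - γ)) * weightedBesselI γ ν x := by
  have hd : 0 < 1 - γ := by linarith
  have ha : 0 < 2 * ν + 1 := by linarith
  have hW := weightedBesselI_pos 1 (show -1 < ν by linarith) hx
  have h_integrable := integrableOn_weightedBesselI γ hν hx.le
  have hP_le : weightedBesselIPrimitive 1 ν x / x ≤ 2 * weightedBesselI 1 ν x := by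
    rw [div_le_iff₀ hx]
    linarith [weightedBesselIPrimitive_le_mul_weightedBesselI zero_le_one hν hx]
  have hexp : 0 ≤ exp ((1 - γ) * x) - 1 := sub_nonneg.2 (one_le_exp (by positivity))
  simp only [funext (weightedBesselI_eq_exp_mul γ ν)] at h_integrable ⊢
  calc ∫ t in (0 : ℝ)..x, exp ((1 - γ) * t) * weightedBesselI 1 ν t
      ≤ (1 + 1 / (2 * ν + 1)) * (weightedBesselIPrimitive 1 ν x / x) *
          ((exp ((1 - γ) * x) - 1) / (1 - γ)) :=
        integral_exp_mul_le_of_mul_le_primitive ha hd hx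
          ((continuousOn_weightedBesselIPrimitive 1 hν).mono Set.Icc_subset_Ici_self)
          (fun t ht => hasDerivAt_weightedBesselIPrimitive (one_pow 2) ν ht.1)
          ((monotoneOn_weightedBesselIPrimitive (one_pow 2) hν).mono Set.Icc_subset_Ici_self)
          (weightedBesselIPrimitive_zero 1 (by linarith)).ge
          (fun t ht => mul_weightedBesselI_le_weightedBesselIPrimitive zero_le_one
            (by linarith) ht.1) h_integrable
    _ ≤ (1 + 1 / (2 * ν + 1)) * (2 * weightedBesselI 1 ν x) *
          ((exp ((1 - γ) * x) - 1) / (1 - γ)) := by gcongr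
    _ < (1 + 1 / (2 * ν + 1)) * (2 * weightedBesselI 1 ν x) * (exp ((1 - γ) * x) / (1 - γ)) := by
        gcongr
        exact sub_one_lt _
    _ = (4 * ν + 4) / ((2 * ν + 1) * (1 - γ)) *
          (exp ((1 - γ) * x) * weightedBesselI 1 ν x) := by
        field_simp
        ring

lemma integral_weightedBesselI_lt_of_half_lt {γ ν x : ℝ} (hγ : γ < 1) (hν : 1 / 2 < ν)
    (hx : 0 < x) :
    ∫ t in (0 : ℝ)..x, weightedBesselI γ ν t < 1 / (1 - γ) * weightedBesselI γ ν x := by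
  have hd : 0 < 1 - γ := by linarith
  have hW := weightedBesselI_pos 1 (show -1 < ν by linarith) hx
  have h_integrable := integrableOn_weightedBesselI γ (show -(1 / 2) < ν by linarith) hx.le
  have hderiv (t : ℝ) : HasDerivAt (fun s => exp ((1 - γ) * s) / (1 - γ) * weightedBesselI 1 ν x)
      (exp ((1 - γ) * t) * weightedBesselI 1 ν x) t := by
    refine ((((hasDerivAt_id t).const_mul (1 - γ)).exp.div_const _).mul_const _).congr_deriv ?_
    simp only [id]
    field_simp
  simp only [funext (weightedBesselI_eq_exp_mul γ ν)] at h_integrable ⊢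
  calc ∫ t in (0 : ℝ)..x, exp ((1 - γ) * t) * weightedBesselI 1 ν t
      ≤ exp ((1 - γ) * x) / (1 - γ) * weightedBesselI 1 ν x -
          exp ((1 - γ) * 0) / (1 - γ) * weightedBesselI 1 ν x := by
        refine intervalIntegral.integral_le_sub_of_hasDeriv_right_of_le hx.le (by fun_prop)
          (fun t _ => (hderiv t).hasDerivWithinAt) h_integrable fun t ht => ?_
        gcongr
        exact monotoneOn_weightedBesselI_one hν ht.1 hx ht.2.le
    _ < exp ((1 - γ) * x) / (1 - γ) * weightedBesselI 1 ν x := sub_lt_self _ (by positivity)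
    _ = 1 / (1 - γ) * (exp ((1 - γ) * x) * weightedBesselI 1 ν x) := by ring

theorem stmt_6_general (γ ν : ℝ) (hγ : γ < 1) (hν : -(1 / 2) < ν) (x : ℝ) (hx : 0 < x) :
    ∫ t in (0 : ℝ)..x, exp (-γ * t) * t ^ ν * besselI ν t <
      ((2 * ν + 7) / ((2 * ν + 1) * (1 - γ))) * (exp (-γ * x) * x ^ ν * besselI ν x) := by
  have hd : 0 < 1 - γ := by linarith
  have ha : 0 < 2 * ν + 1 := by linarith
  have hW : 0 ≤ weightedBesselI γ ν x := (weightedBesselI_pos γ (by linarith) hx).le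
  rcases le_or_gt ν (1 / 2) with hν_le | hν_gt
  · refine (integral_weightedBesselI_lt_of_neg_half_lt hγ hν hx).trans_le
      (mul_le_mul_of_nonneg_right ?_ hW)
    gcongr ?_ / _
    linarith
  · refine (integral_weightedBesselI_lt_of_half_lt hγ hν_gt hx).trans_le
      (mul_le_mul_of_nonneg_right ?_ hW)
    rw [div_le_div_iff₀ hd (by positivity)]
    nlinarith

theorem stmt_6 (γ ν : ℝ) (hγ0 : 0 < γ) (hγ1 : γ < 1) (hν : -(1/2) < ν) (x : ℝ) (hx : 0 < x) :
    ∫ t in (0 : ℝ)..x, Real.exp (-γ * t) * t ^ ν * besselI ν t <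
      ((2 * ν + 7) / ((2 * ν + 1) * (1 - γ))) *
        (Real.exp (-γ * x) * x ^ ν * besselI ν x) :=
  stmt_6_general γ ν hγ1 hν x hx
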